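/- arXiv:math/0409520 — 6 statements merged into one kernel-verified Lean document; each statement's English description precedes it below -/
import Mathlib

section
/- The probability measure μ on [0,1] × P given by the product of the Gauss measure dx/((1+x)·log 2) on [0,1] and the uniform probability measure on the finite set P is invariant under the generalized Gauss shift T (which is defined off the Lebesgue-null set of rational first coordinates): μ(T⁻¹(E)) = μ(E) for every measurable subset E of [0,1] × P. -/
set_option synthInstance.maxHeartbeats 1000000
set_option maxHeartbeats 1000000

open Filter MeasureTheory

noncomputable def gaussMap (x : ℝ) : ℝ := 1 / x - ⌊1 / x⌋

noncomputable def cfDigit (x : ℝ) (n : ℕ) : ℤ := ⌊1 / (gaussMap^[n] x)⌋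

noncomputable def cfP (x : ℝ) : ℕ → ℤ
  | 0 => 0
  | 1 => 1
  | n + 2 => cfDigit x (n + 1) * cfP x (n + 1) + cfP x n

noncomputable def cfQ (x : ℝ) : ℕ → ℤ
  | 0 => 1
  | 1 => cfDigit x 0
  | n + 2 => cfDigit x (n + 1) * cfQ x (n + 1) + cfQ x n

abbrev GL2 := Matrix.GeneralLinearGroup (Fin 2) ℤ

def shiftMat (k : ℤ) : GL2 :=
  ⟨!![-k, 1; 1, 0], !![0, 1; 1, k],
    by ext i j; fin_cases i <;> fin_cases j <;>
      simp [Matrix.mul_apply, Fin.sum_univ_two, Matrix.one_apply],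
    by ext i j; fin_cases i <;> fin_cases j <;>
      simp [Matrix.mul_apply, Fin.sum_univ_two, Matrix.one_apply]⟩

def cfMat (k : ℤ) : GL2 :=
  ⟨!![0, 1; 1, k], !![-k, 1; 1, 0],
    by ext i j; fin_cases i <;> fin_cases j <;>
      simp [Matrix.mul_apply, Fin.sum_univ_two, Matrix.one_apply],
    by ext i j; fin_cases i <;> fin_cases j <;>
      simp [Matrix.mul_apply, Fin.sum_univ_two, Matrix.one_apply]⟩

def negOneGL : GL2 :=
  ⟨-1, -1, by simp, by simp⟩

noncomputable def moebius (γ : GL2) (x : ℝ) : ℝ :=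
  (((γ : Matrix (Fin 2) (Fin 2) ℤ) 0 0 : ℝ) * x + ((γ : Matrix (Fin 2) (Fin 2) ℤ) 0 1 : ℝ)) /
    (((γ : Matrix (Fin 2) (Fin 2) ℤ) 1 0 : ℝ) * x + ((γ : Matrix (Fin 2) (Fin 2) ℤ) 1 1 : ℝ))

noncomputable def gaussShiftP (G : Subgroup GL2) :
    ℝ × (GL2 ⧸ G) → ℝ × (GL2 ⧸ G) :=
  fun p => (gaussMap p.1, shiftMat ⌊1 / p.1⌋ • p.2)

instance (G : Subgroup GL2) : MeasurableSpace (GL2 ⧸ G) := ⊤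

/-- The Gauss measure `dx/((1+x) log 2)` on `[0,1]`. -/
noncomputable def gaussMeasure : Measure ℝ :=
  (volume.restrict (Set.Icc (0 : ℝ) 1)).withDensity
    fun x => ENNReal.ofReal (1 / ((1 + x) * Real.log 2))

/-- The product of the Gauss measure on `[0,1]` and the uniform probability measure on the
finite coset space `P = GL(2,ℤ)/G`. -/
noncomputable def muP (G : Subgroup GL2) : Measure (ℝ × (GL2 ⧸ G)) :=
  gaussMeasure.prod (((Nat.card (GL2 ⧸ G) : ENNReal))⁻¹ • Measure.count)

/-!
The Gauss measure is the fixed point of the transfer operator of the Gauss map: pulling its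
density `ρ` back along the `n`-th inverse branch `y ↦ 1 / (n + 1 + y)` of the map gives
`ρ (n + y) - ρ (n + 1 + y)`, and the sum of these over `n` telescopes to `ρ y`. Hence the Gauss
map preserves the Gauss measure. The generalized Gauss shift is a skew product over the Gauss map
whose fibre maps permute the cosets, so they preserve the uniform measure, and the invariance of
the product measure follows.
-/

open Set Topology

lemma hasSum_sub_succ_of_antitone {f : ℕ → ℝ} {l : ℝ} (hf : Antitone f)
    (hl : Tendsto f atTop (𝓝 l)) : HasSum (fun n ↦ f n - f (n + 1)) (f 0 - l) := by
  rw [hasSum_iff_tendsto_nat_of_nonneg fun n ↦ sub_nonneg.2 (hf n.le_succ)]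
  simpa only [Finset.sum_range_sub'] using hl.const_sub (f 0)

section InverseBranches

/-- The inverse branch of the Gauss map with values in the cylinder of first digit `n + 1`; the
shift by one makes `ℕ` index exactly the possible digits. -/
noncomputable def gaussInvBranch (n : ℕ) (y : ℝ) : ℝ := ((n + 1 : ℕ) + y)⁻¹

lemma gaussMap_eq_fract (x : ℝ) : gaussMap x = Int.fract (1 / x) := rfl

lemma measurable_gaussMap : Measurable gaussMap :=
  measurable_fract.comp (measurable_const.div measurable_id)

lemma gaussMap_mem_Ico (x : ℝ) : gaussMap x ∈ Ico (0 : ℝ) 1 :=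
  ⟨Int.fract_nonneg _, Int.fract_lt_one _⟩

lemma gaussMap_gaussInvBranch (n : ℕ) {y : ℝ} (hy : y ∈ Ico (0 : ℝ) 1) :
    gaussMap (gaussInvBranch n y) = y := by
  rw [gaussMap_eq_fract, gaussInvBranch, one_div, inv_inv, Int.fract_natCast_add,
    Int.fract_eq_self.2 hy]

lemma floor_one_div_gaussInvBranch (n : ℕ) {y : ℝ} (hy : y ∈ Ico (0 : ℝ) 1) :
    ⌊1 / gaussInvBranch n y⌋ = n + 1 := by
  rw [gaussInvBranch, one_div, inv_inv, Int.floor_natCast_add, Int.floor_eq_zero_iff.2 hy,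
    add_zero, Nat.cast_succ]

lemma gaussInvBranch_mem_Ioc (n : ℕ) {y : ℝ} (hy : 0 ≤ y) :
    gaussInvBranch n y ∈ Ioc (0 : ℝ) 1 := by
  have one_le : 1 ≤ ((n + 1 : ℕ) : ℝ) + y := by
    push_cast
    linarith [n.cast_nonneg (α := ℝ)]
  exact ⟨inv_pos.2 (one_pos.trans_le one_le), inv_le_one_of_one_le₀ one_le⟩

lemma exists_gaussInvBranch_gaussMap_eq {x : ℝ} (hx : x ∈ Ioc (0 : ℝ) 1) :
    ∃ n, gaussInvBranch n (gaussMap x) = x := by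
  have floor_pos : 0 < ⌊1 / x⌋ := Int.floor_pos.2 (one_le_one_div hx.1 hx.2)
  obtain ⟨n, hn⟩ := Int.eq_succ_of_zero_lt floor_pos
  have cast_digit : ((n + 1 : ℕ) : ℝ) = ⌊1 / x⌋ := by
    rw [hn]
    norm_cast
  exact ⟨n, by rw [gaussInvBranch, cast_digit, gaussMap_eq_fract, Int.floor_add_fract, one_div,
    inv_inv]⟩

lemma preimage_gaussMap_inter_Ioc (A : Set ℝ) :
    gaussMap ⁻¹' A ∩ Ioc 0 1 = ⋃ n, gaussInvBranch n '' (A ∩ Ico 0 1) := by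
  ext x
  simp only [mem_iUnion]
  constructor
  · rintro ⟨hxA, hx⟩
    obtain ⟨n, hn⟩ := exists_gaussInvBranch_gaussMap_eq hx
    exact ⟨n, gaussMap x, ⟨hxA, gaussMap_mem_Ico x⟩, hn⟩
  · rintro ⟨n, y, ⟨hyA, hy⟩, rfl⟩
    exact ⟨by rwa [mem_preimage, gaussMap_gaussInvBranch n hy], gaussInvBranch_mem_Ioc n hy.1⟩

variable {s : Set ℝ}

lemma pairwise_disjoint_image_gaussInvBranch (hs : s ⊆ Ico 0 1) :
    Pairwise (Function.onFun Disjoint fun n ↦ gaussInvBranch n '' s) := by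
  intro m n hmn
  refine disjoint_left.2 ?_
  rintro _ ⟨y, hy, rfl⟩ ⟨z, hz, hzy⟩
  have digit_eq := floor_one_div_gaussInvBranch n (hs hz)
  rw [hzy, floor_one_div_gaussInvBranch m (hs hy)] at digit_eq
  omega

lemma injective_gaussInvBranch (n : ℕ) : Function.Injective (gaussInvBranch n) :=
  inv_injective.comp (add_right_injective _)

lemma hasDerivAt_gaussInvBranch (n : ℕ) {y : ℝ} (hy : 0 ≤ y) :
    HasDerivAt (gaussInvBranch n) (-gaussInvBranch n y ^ 2) y := by
  have denom_ne : ((n + 1 : ℕ) : ℝ) + y ≠ 0 := by positivity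
  refine (((hasDerivAt_id y).const_add _).inv denom_ne).congr_deriv ?_
  rw [gaussInvBranch, inv_pow, neg_div, one_div, id]

lemma measurable_gaussInvBranch (n : ℕ) : Measurable (gaussInvBranch n) :=
  (measurable_id.const_add _).inv

lemma measurableSet_image_gaussInvBranch (n : ℕ) (hs : MeasurableSet s) :
    MeasurableSet (gaussInvBranch n '' s) :=
  hs.image_of_measurable_injOn (measurable_gaussInvBranch n) (injective_gaussInvBranch n).injOn

lemma setLIntegral_image_gaussInvBranch (n : ℕ) (hs : MeasurableSet s) (hs₀ : s ⊆ Ici 0)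
    (f : ℝ → ENNReal) :
    ∫⁻ x in gaussInvBranch n '' s, f x =
      ∫⁻ y in s, ENNReal.ofReal (gaussInvBranch n y ^ 2) * f (gaussInvBranch n y) := by
  rw [lintegral_image_eq_lintegral_abs_deriv_mul hs
    (fun y hy ↦ (hasDerivAt_gaussInvBranch n (hs₀ hy)).hasDerivWithinAt)
    (injective_gaussInvBranch n).injOn]
  simp only [abs_neg, abs_sq]

end InverseBranches

section GaussDensity

/-- The density of the Gauss measure with respect to Lebesgue measure on `[0,1]`, as the formula on
all of `ℝ`. -/
noncomputable def gaussDensity (x : ℝ) : ℝ := 1 / ((1 + x) * Real.log 2)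

lemma measurable_gaussDensity : Measurable gaussDensity := by
  unfold gaussDensity
  fun_prop

lemma antitoneOn_gaussDensity : AntitoneOn gaussDensity (Ici 0) := by
  intro x (hx : 0 ≤ x) y _ hxy
  unfold gaussDensity
  gcongr

lemma tendsto_gaussDensity_atTop : Tendsto gaussDensity atTop (𝓝 0) :=
  tendsto_const_nhds.div_atTop
    ((tendsto_atTop_add_const_left _ 1 tendsto_id).atTop_mul_const (Real.log_pos one_lt_two))

lemma sq_mul_gaussDensity_gaussInvBranch (n : ℕ) {y : ℝ} (hy : 0 ≤ y) :
    gaussInvBranch n y ^ 2 * gaussDensity (gaussInvBranch n y) =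
      gaussDensity (n + y) - gaussDensity ((n + 1 : ℕ) + y) := by
  unfold gaussDensity gaussInvBranch
  push_cast
  field_simp
  ring

lemma hasSum_sq_mul_gaussDensity_gaussInvBranch {y : ℝ} (hy : 0 ≤ y) :
    HasSum (fun n ↦ gaussInvBranch n y ^ 2 * gaussDensity (gaussInvBranch n y))
      (gaussDensity y) := by
  have anti : Antitone fun n : ℕ ↦ gaussDensity (n + y) := fun m n hmn ↦
    antitoneOn_gaussDensity (add_nonneg m.cast_nonneg hy) (add_nonneg n.cast_nonneg hy) (by gcongr)
  have lim : Tendsto (fun n : ℕ ↦ gaussDensity (n + y)) atTop (𝓝 0) :=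
    tendsto_gaussDensity_atTop.comp
      (tendsto_atTop_add_const_right _ y tendsto_natCast_atTop_atTop)
  simpa only [sq_mul_gaussDensity_gaussInvBranch _ hy, Nat.cast_zero, zero_add, sub_zero] using
    hasSum_sub_succ_of_antitone anti lim

lemma tsum_ofReal_sq_mul_gaussDensity_gaussInvBranch {y : ℝ} (hy : 0 ≤ y) :
    ∑' n, ENNReal.ofReal (gaussInvBranch n y ^ 2) *
        ENNReal.ofReal (gaussDensity (gaussInvBranch n y)) =
      ENNReal.ofReal (gaussDensity y) := by
  have hsum := hasSum_sq_mul_gaussDensity_gaussInvBranch hy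
  have term_nonneg (n : ℕ) : 0 ≤ gaussInvBranch n y ^ 2 * gaussDensity (gaussInvBranch n y) := by
    unfold gaussDensity gaussInvBranch
    positivity
  simp only [← ENNReal.ofReal_mul (sq_nonneg _)]
  rw [← ENNReal.ofReal_tsum_of_nonneg term_nonneg hsum.summable, hsum.tsum_eq]

end GaussDensity

section GaussMeasure

instance sFinite_gaussMeasure : SFinite gaussMeasure := by
  unfold gaussMeasure
  infer_instance

lemma gaussMeasure_apply_of_ae_eq_Icc {s I : Set ℝ} (hs : MeasurableSet s)
    (hI : I =ᵐ[volume] Icc (0 : ℝ) 1) :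
    gaussMeasure s = ∫⁻ x in s ∩ I, ENNReal.ofReal (gaussDensity x) := by
  rw [gaussMeasure, withDensity_apply _ hs, Measure.restrict_restrict hs,
    Measure.restrict_congr_set ((ae_eq_refl s).inter hI.symm)]
  rfl

theorem measurePreserving_gaussMap : MeasurePreserving gaussMap gaussMeasure gaussMeasure := by
  refine ⟨measurable_gaussMap, Measure.ext fun A hA ↦ ?_⟩
  have hA' : MeasurableSet (A ∩ Ico 0 1) := hA.inter measurableSet_Ico
  calc gaussMeasure.map gaussMap A
      = gaussMeasure (gaussMap ⁻¹' A) := Measure.map_apply measurable_gaussMap hA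
    _ = ∫⁻ x in ⋃ n, gaussInvBranch n '' (A ∩ Ico 0 1), ENNReal.ofReal (gaussDensity x) := by
      rw [gaussMeasure_apply_of_ae_eq_Icc (measurable_gaussMap hA) Ioc_ae_eq_Icc,
        preimage_gaussMap_inter_Ioc]
    _ = ∑' n, ∫⁻ x in gaussInvBranch n '' (A ∩ Ico 0 1), ENNReal.ofReal (gaussDensity x) :=
      lintegral_iUnion (fun n ↦ measurableSet_image_gaussInvBranch n hA')
        (pairwise_disjoint_image_gaussInvBranch inter_subset_right) _
    _ = ∑' n, ∫⁻ y in A ∩ Ico 0 1, ENNReal.ofReal (gaussInvBranch n y ^ 2) *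
          ENNReal.ofReal (gaussDensity (gaussInvBranch n y)) :=
      tsum_congr fun n ↦ setLIntegral_image_gaussInvBranch n hA' (fun _ hy ↦ hy.2.1) _
    _ = ∫⁻ y in A ∩ Ico 0 1, ∑' n, ENNReal.ofReal (gaussInvBranch n y ^ 2) *
          ENNReal.ofReal (gaussDensity (gaussInvBranch n y)) :=
      (lintegral_tsum fun n ↦ (((measurable_gaussInvBranch n).pow_const 2).ennreal_ofReal.mul
        (measurable_gaussDensity.comp
          (measurable_gaussInvBranch n)).ennreal_ofReal).aemeasurable).symm
    _ = ∫⁻ y in A ∩ Ico 0 1, ENNReal.ofReal (gaussDensity y) :=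
      setLIntegral_congr_fun hA' fun y hy ↦ tsum_ofReal_sq_mul_gaussDensity_gaussInvBranch hy.2.1
    _ = gaussMeasure A := (gaussMeasure_apply_of_ae_eq_Icc hA Ico_ae_eq_Icc).symm

end GaussMeasure

section SkewProduct

theorem stmt5_general {P : Type*} [MeasurableSpace P] {ν : Measure P} [SFinite ν]
    {f : ℤ → P → P} (hf : ∀ k, MeasurePreserving (f k) ν ν) :
    MeasurePreserving (fun p : ℝ × P ↦ (gaussMap p.1, f ⌊1 / p.1⌋ p.2))
      (gaussMeasure.prod ν) (gaussMeasure.prod ν) := by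
  have measurable_digit : Measurable fun x : ℝ ↦ ⌊1 / x⌋ :=
    Int.measurable_floor.comp (measurable_const.div measurable_id)
  have measurable_f : Measurable (Function.uncurry f) :=
    measurable_from_prod_countable_right fun k ↦ (hf k).measurable
  exact measurePreserving_gaussMap.skew_product (g := fun x s ↦ f ⌊1 / x⌋ s)
    (measurable_f.comp (measurable_digit.prodMap measurable_id))
    (ae_of_all _ fun x ↦ (hf ⌊1 / x⌋).map_eq)

instance smulInvariantMeasure_count {H α : Type*} [Group H] [MulAction H α] [MeasurableSpace α]
    [MeasurableConstSMul H α] : SMulInvariantMeasure H α Measure.count where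
  measure_preimage_smul c s hs := by
    rw [Measure.count_apply hs, Measure.count_apply (hs.preimage (measurable_const_smul c)),
      encard_preimage_of_bijective (MulAction.bijective c)]

instance measurableConstSMul_quotient (G : Subgroup GL2) : MeasurableConstSMul GL2 (GL2 ⧸ G) where
  measurable_const_smul _ := measurable_from_top

end SkewProduct

/-- the product of the Gauss measure and the uniform probability measure on `P`
is invariant under the generalized Gauss shift. -/
theorem stmt5 (G : Subgroup GL2) (hGfin : G.FiniteIndex) (hneg : negOneGL ∈ G)
    (E : Set (ℝ × (GL2 ⧸ G))) (hE : MeasurableSet E) :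
    muP G (gaussShiftP G ⁻¹' E) = muP G E := by
  exact (stmt5_general fun k ↦ measurePreserving_smul (shiftMat k) _).measure_preimage
    hE.nullMeasurableSet
end

section
/- For every irrational β ∈ (0,1) and every n ≥ 1, β lies strictly between the consecutive convergents p_{n−1}/q_{n−1} and pₙ/qₙ of its continued fraction expansion, and the quantity Im yₙ := sqrt(|β − p_{n−1}(β)/q_{n−1}(β)| · |β − pₙ(β)/qₙ(β)|) — the imaginary part of the intersection point of the vertical geodesic at β with the geodesic semicircle in the upper half-plane whose endpoints are p_{n−1}/q_{n−1} and pₙ/qₙ — satisfies the estimate 1/(2·qₙ(β)·q_{n+1}(β)) < Im yₙ < 1/(2·q_{n−1}(β)·qₙ(β)). -/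
set_option synthInstance.maxHeartbeats 1000000
set_option maxHeartbeats 1000000

open Filter MeasureTheory

/-!
With `G` the Gauss map, the signed error `x - pₙ/qₙ` is multiplied by `-Gⁿ⁺¹(x) qₙ / qₙ₊₁`, a factor
in `(-1, 0)`, when `n` increases by one, so consecutive convergents lie on opposite sides of
`x` and the distances `dₙ = |x - pₙ/qₙ|` strictly decrease. As consecutive convergents are
`1 / (qₙ qₙ₊₁)` apart, `dₙ + dₙ₊₁ = 1 / (qₙ qₙ₊₁)`. The imaginary part is the geometric mean of
`dₙ₋₁` and `dₙ`: it is smaller than their arithmetic mean `1 / (2 qₙ₋₁ qₙ)`, and larger than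
`dₙ > (dₙ + dₙ₊₁) / 2 = 1 / (2 qₙ qₙ₊₁)`.
-/

lemma sqrt_mul_lt_half_add_of_ne {a b : ℝ} (ha : 0 ≤ a) (hb : 0 ≤ b) (hab : a ≠ b) :
    √(a * b) < (a + b) / 2 := by
  lift a to NNReal using ha
  lift b to NNReal using hb
  rw [← NNReal.coe_mul, ← Real.coe_sqrt]
  exact_mod_cast NNReal.sqrt_mul_lt_half_add_of_ne (mod_cast hab)

variable {x : ℝ}

lemma irrational_gaussMap (hI : Irrational x) : Irrational (gaussMap x) := by
  rw [gaussMap, one_div]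
  exact hI.inv.sub_intCast _

lemma gaussMap_mem_Ioo (hI : Irrational x) : gaussMap x ∈ Set.Ioo (0 : ℝ) 1 :=
  ⟨(Int.fract_nonneg (1 / x)).lt_of_ne' (irrational_gaussMap hI).ne_zero, Int.fract_lt_one (1 / x)⟩

lemma irrational_iterate_gaussMap (hI : Irrational x) : ∀ n, Irrational (gaussMap^[n] x)
  | 0 => hI
  | n + 1 => by
    rw [Function.iterate_succ_apply']
    exact irrational_gaussMap (irrational_iterate_gaussMap hI n)

lemma iterate_gaussMap_succ_mem_Ioo (hI : Irrational x) (n : ℕ) :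
    gaussMap^[n + 1] x ∈ Set.Ioo (0 : ℝ) 1 := by
  rw [Function.iterate_succ_apply']
  exact gaussMap_mem_Ioo (irrational_iterate_gaussMap hI n)

lemma inv_iterate_gaussMap (x : ℝ) (n : ℕ) :
    (gaussMap^[n] x)⁻¹ = cfDigit x n + gaussMap^[n + 1] x := by
  rw [Function.iterate_succ_apply', gaussMap, cfDigit, one_div, add_sub_cancel]

lemma cfP_succ_mul_cfQ_sub (x : ℝ) (n : ℕ) :
    cfP x (n + 1) * cfQ x n - cfP x n * cfQ x (n + 1) = (-1) ^ n := by
  induction n with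
  | zero => simp [cfP, cfQ]
  | succ n ih =>
    rw [cfP, cfQ, pow_succ, ← ih]
    ring

lemma cfQ_succ_mul_sub_cfP_succ (hI : Irrational x) (n : ℕ) :
    cfQ x (n + 1) * x - cfP x (n + 1) = -(gaussMap^[n + 1] x * (cfQ x n * x - cfP x n)) := by
  induction n with
  | zero =>
    have hdigit : x⁻¹ = cfDigit x 0 + gaussMap^[1] x := inv_iterate_gaussMap x 0
    simp only [cfP, cfQ, Int.cast_zero, Int.cast_one]
    linear_combination -x * hdigit + mul_inv_cancel₀ hI.ne_zero
  | succ n ih =>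
    have hne : gaussMap^[n + 1] x ≠ 0 := (irrational_iterate_gaussMap hI _).ne_zero
    have hprev : cfQ x n * x - cfP x n =
        -((gaussMap^[n + 1] x)⁻¹ * (cfQ x (n + 1) * x - cfP x (n + 1))) := by
      rw [ih, mul_neg, neg_neg, inv_mul_cancel_left₀ hne]
    rw [inv_iterate_gaussMap] at hprev
    rw [cfP, cfQ]
    push_cast
    linear_combination hprev

/-- The signed error `x - pₙ/qₙ` of the `n`-th convergent of `x`: the sign tells on which
side of `x` the convergent lies. -/
noncomputable def cfError (x : ℝ) (n : ℕ) : ℝ := x - cfP x n / cfQ x n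

lemma cfError_ne_zero (hI : Irrational x) (n : ℕ) : cfError x n ≠ 0 :=
  sub_ne_zero.2 <| mod_cast hI.ne_rat (cfP x n / cfQ x n)

section UnitInterval

variable (hx : x ∈ Set.Ioo (0 : ℝ) 1) (hI : Irrational x)
include hx hI

lemma cfDigit_pos (n : ℕ) : 0 < cfDigit x n := by
  have hmem : gaussMap^[n] x ∈ Set.Ioo (0 : ℝ) 1 := by
    cases n with
    | zero => exact hx
    | succ n => exact iterate_gaussMap_succ_mem_Ioo hI n
  rw [cfDigit, Int.floor_pos, one_div]
  exact ((one_lt_inv₀ hmem.1).2 hmem.2).le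

lemma cfQ_pos : ∀ n, 0 < cfQ x n
  | 0 => one_pos
  | 1 => cfDigit_pos hx hI 0
  | n + 2 => add_pos (mul_pos (cfDigit_pos hx hI (n + 1)) (cfQ_pos (n + 1))) (cfQ_pos n)

lemma cfQ_le_cfQ_succ : ∀ n, cfQ x n ≤ cfQ x (n + 1)
  | 0 => cfDigit_pos hx hI 0
  | n + 1 => calc
      cfQ x (n + 1) ≤ cfDigit x (n + 1) * cfQ x (n + 1) :=
        le_mul_of_one_le_left (cfQ_pos hx hI _).le (cfDigit_pos hx hI _)
      _ ≤ cfQ x (n + 2) := le_add_of_nonneg_right (cfQ_pos hx hI n).le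

lemma exists_cfError_succ_eq_neg_mul (n : ℕ) :
    ∃ r ∈ Set.Ioo (0 : ℝ) 1, cfError x (n + 1) = -(r * cfError x n) := by
  have hq : (0 : ℝ) < cfQ x n := mod_cast cfQ_pos hx hI n
  have hq' : (0 : ℝ) < cfQ x (n + 1) := mod_cast cfQ_pos hx hI (n + 1)
  have hle : (cfQ x n : ℝ) ≤ cfQ x (n + 1) := mod_cast cfQ_le_cfQ_succ hx hI n
  obtain ⟨ht₀, ht₁⟩ := iterate_gaussMap_succ_mem_Ioo hI n
  refine ⟨gaussMap^[n + 1] x * cfQ x n / cfQ x (n + 1), ⟨by positivity, ?_⟩, ?_⟩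
  · rw [div_lt_one hq']
    exact (mul_lt_of_lt_one_left hq ht₁).trans_le hle
  · have hrec := cfQ_succ_mul_sub_cfP_succ hI n
    rw [cfError, cfError]
    field_simp
    linear_combination hrec

lemma cfError_mul_cfError_succ_neg (n : ℕ) : cfError x n * cfError x (n + 1) < 0 := by
  obtain ⟨r, ⟨hr, -⟩, h⟩ := exists_cfError_succ_eq_neg_mul hx hI n
  rw [h, mul_neg, mul_left_comm, neg_lt_zero]
  exact mul_pos hr (mul_self_pos.2 (cfError_ne_zero hI n))

lemma abs_cfError_succ_lt (n : ℕ) : |cfError x (n + 1)| < |cfError x n| := by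
  obtain ⟨r, ⟨hr₀, hr₁⟩, h⟩ := exists_cfError_succ_eq_neg_mul hx hI n
  rw [h, abs_neg, abs_mul, abs_of_pos hr₀]
  exact mul_lt_of_lt_one_left (abs_pos.2 (cfError_ne_zero hI n)) hr₁

lemma cfError_sub_cfError_succ (n : ℕ) :
    cfError x n - cfError x (n + 1) = (-1) ^ n / (cfQ x n * cfQ x (n + 1)) := by
  have hq : (cfQ x n : ℝ) ≠ 0 := mod_cast (cfQ_pos hx hI n).ne'
  have hq' : (cfQ x (n + 1) : ℝ) ≠ 0 := mod_cast (cfQ_pos hx hI (n + 1)).ne'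
  have hdet : (cfP x (n + 1) * cfQ x n - cfP x n * cfQ x (n + 1) : ℝ) = (-1) ^ n :=
    mod_cast cfP_succ_mul_cfQ_sub x n
  rw [cfError, cfError, sub_sub_sub_cancel_left, div_sub_div _ _ hq' hq, ← hdet]
  ring

lemma abs_cfError_add_abs_cfError_succ (n : ℕ) :
    |cfError x n| + |cfError x (n + 1)| = 1 / (cfQ x n * cfQ x (n + 1)) := by
  have hq : (0 : ℝ) < cfQ x n := mod_cast cfQ_pos hx hI n
  have hq' : (0 : ℝ) < cfQ x (n + 1) := mod_cast cfQ_pos hx hI (n + 1)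
  calc |cfError x n| + |cfError x (n + 1)|
      = |cfError x n - cfError x (n + 1)| := by
        rcases mul_neg_iff.1 (cfError_mul_cfError_succ_neg hx hI n) with ⟨h, h'⟩ | ⟨h, h'⟩
        · rw [abs_of_pos h, abs_of_neg h', abs_of_pos (by linarith), sub_eq_add_neg]
        · rw [abs_of_neg h, abs_of_pos h', abs_of_neg (by linarith)]
          ring
    _ = 1 / (cfQ x n * cfQ x (n + 1)) := by
        rw [cfError_sub_cfError_succ hx hI, abs_div, abs_neg_one_pow, abs_of_pos (mul_pos hq hq')]

lemma one_div_two_mul_lt_abs_cfError (n : ℕ) :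
    1 / (2 * cfQ x n * cfQ x (n + 1)) < |cfError x n| := by
  have hsum := abs_cfError_add_abs_cfError_succ hx hI n
  have hlt := abs_cfError_succ_lt hx hI n
  rw [mul_assoc, mul_comm, ← div_div, ← hsum]
  linarith

lemma sqrt_abs_cfError_mul_lt (n : ℕ) :
    √(|cfError x n| * |cfError x (n + 1)|) < 1 / (2 * cfQ x n * cfQ x (n + 1)) :=
  calc √(|cfError x n| * |cfError x (n + 1)|)
      < (|cfError x n| + |cfError x (n + 1)|) / 2 :=
        sqrt_mul_lt_half_add_of_ne (abs_nonneg _) (abs_nonneg _) (abs_cfError_succ_lt hx hI n).ne'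
    _ = 1 / (2 * cfQ x n * cfQ x (n + 1)) := by
        rw [abs_cfError_add_abs_cfError_succ hx hI, div_div, mul_comm _ (2 : ℝ), mul_assoc]

lemma one_div_two_mul_lt_sqrt_abs_cfError_mul (n : ℕ) :
    1 / (2 * cfQ x (n + 1) * cfQ x (n + 2)) < √(|cfError x n| * |cfError x (n + 1)|) :=
  calc 1 / (2 * cfQ x (n + 1) * cfQ x (n + 2) : ℝ)
      < |cfError x (n + 1)| := one_div_two_mul_lt_abs_cfError hx hI (n + 1)
    _ = √(|cfError x (n + 1)| * |cfError x (n + 1)|) := (Real.sqrt_mul_self (abs_nonneg _)).symm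
    _ ≤ √(|cfError x n| * |cfError x (n + 1)|) :=
        Real.sqrt_le_sqrt <|
          mul_le_mul_of_nonneg_right (abs_cfError_succ_lt hx hI n).le (abs_nonneg _)

end UnitInterval

/-- `β` lies strictly between consecutive convergents, and the imaginary part of
the intersection of the vertical geodesic at `β` with the geodesic semicircle joining
`p_{n-1}/q_{n-1}` and `pₙ/qₙ` satisfies `1/(2 qₙ q_{n+1}) < Im yₙ < 1/(2 q_{n-1} qₙ)`. -/
theorem stmt6 (β : ℝ) (hβ : β ∈ Set.Ioo (0 : ℝ) 1) (hβI : Irrational β)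
    (n : ℕ) (hn : 1 ≤ n) :
    (((cfP β (n - 1) : ℝ) / (cfQ β (n - 1) : ℝ) < β ∧ β < (cfP β n : ℝ) / (cfQ β n : ℝ)) ∨
      ((cfP β n : ℝ) / (cfQ β n : ℝ) < β ∧ β < (cfP β (n - 1) : ℝ) / (cfQ β (n - 1) : ℝ))) ∧
    1 / (2 * (cfQ β n : ℝ) * (cfQ β (n + 1) : ℝ)) <
      Real.sqrt (|β - (cfP β (n - 1) : ℝ) / (cfQ β (n - 1) : ℝ)| *
        |β - (cfP β n : ℝ) / (cfQ β n : ℝ)|) ∧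
    Real.sqrt (|β - (cfP β (n - 1) : ℝ) / (cfQ β (n - 1) : ℝ)| *
        |β - (cfP β n : ℝ) / (cfQ β n : ℝ)|) <
      1 / (2 * (cfQ β (n - 1) : ℝ) * (cfQ β n : ℝ)) := by
  obtain ⟨m, rfl⟩ := Nat.exists_eq_add_of_le' hn
  rw [Nat.add_sub_cancel]
  refine ⟨?_, one_div_two_mul_lt_sqrt_abs_cfError_mul hβ hβI m, sqrt_abs_cfError_mul_lt hβ hβI m⟩
  rcases mul_neg_iff.1 (cfError_mul_cfError_succ_neg hβ hβI m) with ⟨hm, hm'⟩ | ⟨hm, hm'⟩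
  · exact .inl ⟨sub_pos.1 hm, sub_neg.1 hm'⟩
  · exact .inr ⟨sub_pos.1 hm', sub_neg.1 hm⟩
end

section
/- Commensurability is an equivalence relation on the set of ℚ-lattices in ℝⁿ: it is reflexive, symmetric, and transitive. (Transitivity: if (Λ₁,φ₁) is commensurable with (Λ₂,φ₂) and (Λ₂,φ₂) is commensurable with (Λ₃,φ₃), then (Λ₁,φ₁) is commensurable with (Λ₃,φ₃).) -/
set_option synthInstance.maxHeartbeats 1000000
set_option maxHeartbeats 1000000

/-- The subgroup `ℤⁿ ⊂ ℚⁿ` of integer vectors. -/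
def intVecs (n : ℕ) : AddSubgroup (Fin n → ℚ) where
  carrier := {v | ∀ i, ∃ m : ℤ, v i = m}
  add_mem' := by
    rintro a b ha hb i
    obtain ⟨p, hp⟩ := ha i
    obtain ⟨q, hq⟩ := hb i
    exact ⟨p + q, by simp [hp, hq]⟩
  zero_mem' := fun i => ⟨0, by simp⟩
  neg_mem' := by
    rintro a ha i
    obtain ⟨p, hp⟩ := ha i
    exact ⟨-p, by simp [hp]⟩

/-- A `ℚ`-lattice in `ℝⁿ`: a lattice `Λ ⊂ ℝⁿ` (the `ℤ`-span of an `ℝ`-basis) together with a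
homomorphism `φ : ℚⁿ/ℤⁿ → ℚΛ/Λ` (encoded as a homomorphism into `ℝⁿ/Λ` landing in the image
of the `ℚ`-span `ℚΛ` of `Λ`). -/
structure QLatticeN (n : ℕ) where
  L : AddSubgroup (Fin n → ℝ)
  exists_basis : ∃ b : Module.Basis (Fin n) ℝ (Fin n → ℝ), L = AddSubgroup.closure (Set.range ⇑b)
  phi : ((Fin n → ℚ) ⧸ intVecs n) →+ ((Fin n → ℝ) ⧸ L)
  phi_mem : ∀ x, phi x ∈ AddSubgroup.map (QuotientAddGroup.mk' L)
      (Submodule.span ℚ ((L : Set (Fin n → ℝ)))).toAddSubgroup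

/-- Commensurability of `ℚ`-lattices: `ℚΛ₁ = ℚΛ₂` and `φ₁ = φ₂ mod Λ₁ + Λ₂`. -/
def QLatComm {n : ℕ} (L₁ L₂ : QLatticeN n) : Prop :=
  Submodule.span ℚ ((L₁.L : Set (Fin n → ℝ))) = Submodule.span ℚ ((L₂.L : Set (Fin n → ℝ))) ∧
  ∀ v : (Fin n → ℚ) ⧸ intVecs n,
    QuotientAddGroup.map L₁.L (L₁.L ⊔ L₂.L) (AddMonoidHom.id _)
        (fun x hx => AddSubgroup.mem_comap.mpr (AddSubgroup.mem_sup_left hx)) (L₁.phi v) =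
      QuotientAddGroup.map L₂.L (L₁.L ⊔ L₂.L) (AddMonoidHom.id _)
        (fun x hx => AddSubgroup.mem_comap.mpr (AddSubgroup.mem_sup_right hx)) (L₂.phi v)

/-!
Suppose `(Λ₁, φ₁)`, `(Λ₂, φ₂)`, `(Λ₃, φ₃)` are successively commensurable. The three homomorphisms
agree modulo `Λ₁ + Λ₂ + Λ₃`, so `φ₁ - φ₃` modulo `Λ₁ + Λ₃` takes values in
`(Λ₁ + Λ₂ + Λ₃) / (Λ₁ + Λ₃)`. Since `Λ₂` is finitely generated and contained in `ℚΛ₁`, some nonzero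
integer `N` satisfies `N Λ₂ ⊆ Λ₁`, so `N` annihilates that quotient. The source `ℚⁿ/ℤⁿ` is
divisible, hence a homomorphism from it to a group annihilated by `N` vanishes.
-/

section ClearingDenominators

variable {V : Type*} [AddCommGroup V] [Module ℚ V]

theorem exists_zsmul_mem_of_mem_span_rat {L : AddSubgroup V} {x : V}
    (hx : x ∈ Submodule.span ℚ (L : Set V)) : ∃ N : ℤ, N ≠ 0 ∧ N • x ∈ L := by
  obtain ⟨y, hy, N, rfl⟩ := (IsLocalization.mem_span_iff (nonZeroDivisors ℤ)).1 hx
  have hyL : y ∈ L := by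
    rwa [← AddSubgroup.coe_toIntSubmodule, Submodule.span_eq] at hy
  refine ⟨N, nonZeroDivisors.coe_ne_zero N, ?_⟩
  rwa [← smul_assoc, IsLocalization.smul_mk'_self, map_one, one_smul]

theorem exists_forall_zsmul_mem_of_subset_span_rat {L M : AddSubgroup V} (hM : M.FG)
    (hML : (M : Set V) ⊆ Submodule.span ℚ (L : Set V)) :
    ∃ N : ℤ, N ≠ 0 ∧ ∀ x ∈ M, N • x ∈ L := by
  obtain ⟨S, rfl⟩ := hM
  choose! d hd_ne_zero hd_mem using fun x (hx : x ∈ S) ↦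
    exists_zsmul_mem_of_mem_span_rat (hML (AddSubgroup.subset_closure hx))
  refine ⟨∏ x ∈ S, d x, Finset.prod_ne_zero_iff.2 hd_ne_zero, ?_⟩
  suffices AddSubgroup.closure S ≤ L.comap (zsmulAddGroupHom (∏ x ∈ S, d x)) from this
  refine (AddSubgroup.closure_le _).2 fun x hx ↦ ?_
  obtain ⟨c, hc⟩ := Finset.dvd_prod_of_mem d hx
  change (∏ x ∈ S, d x) • x ∈ L
  rw [hc, mul_comm, mul_smul]
  exact L.zsmul_mem (hd_mem x hx) c

end ClearingDenominators

section AgreeMod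

variable {D V : Type*} [AddCommGroup D] [AddCommGroup V] {L L₁ L₂ L₃ H K : AddSubgroup V}
  {φ₁ : D →+ V ⧸ L₁} {φ₂ : D →+ V ⧸ L₂} {φ₃ : D →+ V ⧸ L₃}

/-- The reduction homomorphism `V/L → V/H` for `L ≤ H`. -/
def reduceMod (h : L ≤ H) : V ⧸ L →+ V ⧸ H :=
  QuotientAddGroup.map L H (AddMonoidHom.id V) h

theorem reduceMod_reduceMod (hLH : L ≤ H) (hHK : H ≤ K) (a : V ⧸ L) :
    reduceMod hHK (reduceMod hLH a) = reduceMod (hLH.trans hHK) a :=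
  QuotientAddGroup.map_map L H K (AddMonoidHom.id V) (AddMonoidHom.id V) hLH hHK _ a

theorem zsmul_eq_zero_of_reduceMod_eq_zero {N : ℤ} {hHK : H ≤ K} (hN : ∀ x ∈ K, N • x ∈ H)
    {a : V ⧸ H} (ha : reduceMod hHK a = 0) : N • a = 0 := by
  obtain ⟨x, rfl⟩ := QuotientAddGroup.mk_surjective a
  have hx : x ∈ K := (QuotientAddGroup.eq_zero_iff x).1 ha
  exact (QuotientAddGroup.eq_zero_iff (N • x)).2 (hN x hx)

/-- `φ₁ = φ₂ mod H`: the homomorphisms `φ₁ : D → V/L₁` and `φ₂ : D → V/L₂` become equal after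
reduction modulo a subgroup `H` containing both `L₁` and `L₂`. -/
def AgreeMod (H : AddSubgroup V) (h₁ : L₁ ≤ H) (h₂ : L₂ ≤ H) (φ₁ : D →+ V ⧸ L₁)
    (φ₂ : D →+ V ⧸ L₂) : Prop :=
  ∀ v, reduceMod h₁ (φ₁ v) = reduceMod h₂ (φ₂ v)

theorem AgreeMod.symm {h₁ : L₁ ≤ H} {h₂ : L₂ ≤ H} (h : AgreeMod H h₁ h₂ φ₁ φ₂) :
    AgreeMod H h₂ h₁ φ₂ φ₁ :=
  fun v ↦ (h v).symm

theorem AgreeMod.trans {h₁ : L₁ ≤ H} {h₂ : L₂ ≤ H} {h₃ : L₃ ≤ H}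
    (h₁₂ : AgreeMod H h₁ h₂ φ₁ φ₂) (h₂₃ : AgreeMod H h₂ h₃ φ₂ φ₃) : AgreeMod H h₁ h₃ φ₁ φ₃ :=
  fun v ↦ (h₁₂ v).trans (h₂₃ v)

theorem AgreeMod.mono {h₁ : L₁ ≤ H} {h₂ : L₂ ≤ H} (h : AgreeMod H h₁ h₂ φ₁ φ₂) (hHK : H ≤ K) :
    AgreeMod K (h₁.trans hHK) (h₂.trans hHK) φ₁ φ₂ := fun v ↦ by
  rw [← reduceMod_reduceMod h₁ hHK, ← reduceMod_reduceMod h₂ hHK, h v]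

theorem AgreeMod.of_zsmul_mem [DivisibleBy D ℤ] {N : ℤ} (hN_ne_zero : N ≠ 0) (hHK : H ≤ K)
    (hN : ∀ x ∈ K, N • x ∈ H) {h₁ : L₁ ≤ H} {h₂ : L₂ ≤ H}
    (h : AgreeMod K (h₁.trans hHK) (h₂.trans hHK) φ₁ φ₂) : AgreeMod H h₁ h₂ φ₁ φ₂ := fun v ↦ by
  obtain ⟨w, rfl⟩ : ∃ w : D, N • w = v := DivisibleBy.surjective_smul D ℤ hN_ne_zero v
  have hw : reduceMod hHK (reduceMod h₁ (φ₁ w) - reduceMod h₂ (φ₂ w)) = 0 := by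
    rw [map_sub, reduceMod_reduceMod, reduceMod_reduceMod, h w, sub_self]
  rw [← sub_eq_zero]
  simpa only [map_zsmul, zsmul_sub] using zsmul_eq_zero_of_reduceMod_eq_zero hN hw

theorem AgreeMod.trans_sup [DivisibleBy D ℤ] {N : ℤ} (hN_ne_zero : N ≠ 0)
    (hN : ∀ x ∈ L₂, N • x ∈ L₁ ⊔ L₃)
    (h₁₂ : AgreeMod (L₁ ⊔ L₂) le_sup_left le_sup_right φ₁ φ₂)
    (h₂₃ : AgreeMod (L₂ ⊔ L₃) le_sup_left le_sup_right φ₂ φ₃) :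
    AgreeMod (L₁ ⊔ L₃) le_sup_left le_sup_right φ₁ φ₃ := by
  have le₁₂ : L₁ ⊔ L₂ ≤ L₁ ⊔ L₃ ⊔ L₂ := sup_le_sup_right le_sup_left L₂
  have le₂₃ : L₂ ⊔ L₃ ≤ L₁ ⊔ L₃ ⊔ L₂ := sup_le le_sup_right (le_sup_right.trans le_sup_left)
  refine .of_zsmul_mem hN_ne_zero (K := L₁ ⊔ L₃ ⊔ L₂) le_sup_left ?_
    ((h₁₂.mono le₁₂).trans (h₂₃.mono le₂₃))
  suffices L₁ ⊔ L₃ ⊔ L₂ ≤ (L₁ ⊔ L₃).comap (zsmulAddGroupHom N) from this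
  exact sup_le (fun _ hx ↦ zsmul_mem hx N) hN

end AgreeMod

/-- A finitely generated subgroup `L` of `V` with a homomorphism `D → V/L`: a `ℚ`-lattice in which
`ℝⁿ` and `ℚⁿ/ℤⁿ` are replaced by arbitrary groups `V` and `D`. -/
structure LabelledSubgroup (D V : Type*) [AddCommGroup D] [AddCommGroup V] where
  L : AddSubgroup V
  fg : L.FG
  phi : D →+ V ⧸ L

namespace LabelledSubgroup

variable {D V : Type*} [AddCommGroup D] [AddCommGroup V] [Module ℚ V]

/-- Commensurability: the two subgroups have the same `ℚ`-span, and the two homomorphisms agree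
modulo the sum of the subgroups. -/
def Commensurable (A B : LabelledSubgroup D V) : Prop :=
  Submodule.span ℚ (A.L : Set V) = Submodule.span ℚ (B.L : Set V) ∧
    AgreeMod (A.L ⊔ B.L) le_sup_left le_sup_right A.phi B.phi

theorem Commensurable.refl (A : LabelledSubgroup D V) : A.Commensurable A :=
  ⟨rfl, fun _ ↦ rfl⟩

theorem Commensurable.symm {A B : LabelledSubgroup D V} (h : A.Commensurable B) :
    B.Commensurable A :=
  ⟨h.1.symm, h.2.symm.mono (sup_comm _ _).le⟩

theorem Commensurable.trans [DivisibleBy D ℤ] {A B C : LabelledSubgroup D V}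
    (hAB : A.Commensurable B) (hBC : B.Commensurable C) : A.Commensurable C := by
  have hB : (B.L : Set V) ⊆ Submodule.span ℚ (A.L : Set V) := hAB.1 ▸ Submodule.subset_span
  obtain ⟨N, hN_ne_zero, hN⟩ := exists_forall_zsmul_mem_of_subset_span_rat B.fg hB
  exact ⟨hAB.1.trans hBC.1,
    hAB.2.trans_sup hN_ne_zero (fun x hx ↦ AddSubgroup.mem_sup_left (hN x hx)) hBC.2⟩

end LabelledSubgroup

theorem stmt9_general (D V : Type*) [AddCommGroup D] [DivisibleBy D ℤ] [AddCommGroup V]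
    [Module ℚ V] : Equivalence (LabelledSubgroup.Commensurable (D := D) (V := V)) :=
  ⟨.refl, .symm, .trans⟩

namespace QLatticeN

variable {n : ℕ}

theorem fg_L (A : QLatticeN n) : A.L.FG := by
  obtain ⟨b, hb⟩ := A.exists_basis
  exact (AddSubgroup.fg_iff A.L).2 ⟨Set.range b, hb.symm, Set.finite_range b⟩

/-- The labelled subgroup underlying a `ℚ`-lattice; it forgets that `Λ` spans `ℝⁿ` and that `φ`
takes values in `ℚΛ/Λ`. -/
def toLabelledSubgroup (A : QLatticeN n) :
    LabelledSubgroup ((Fin n → ℚ) ⧸ intVecs n) (Fin n → ℝ) :=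
  ⟨A.L, A.fg_L, A.phi⟩

end QLatticeN

/-- commensurability is an equivalence relation on the set of `ℚ`-lattices
in `ℝⁿ`. -/
theorem stmt9 (n : ℕ) : Equivalence (fun L₁ L₂ : QLatticeN n => QLatComm L₁ L₂) := by
  let _ : DivisibleBy ((Fin n → ℚ) ⧸ intVecs n) ℤ :=
    QuotientAddGroup.mk_surjective.divisibleBy _ fun _ _ ↦ rfl
  exact (stmt9_general _ _).comap QLatticeN.toLabelledSubgroup
end

section
/- For every integer n ≥ 1, the set { m ∈ M₂(ℤ) : det m = n } of 2×2 integer matrices of determinant n decomposes into exactly σ(n) = Σ_{d|n} d orbits under left multiplication by SL(2,ℤ). (This computes the partition function of the GL₂-system: Σ_{m ∈ Γ\M₂⁺(ℤ)} det(m)^{−β} = Σ_{k≥1} σ(k) k^{−β} = ζ(β)ζ(β−1).) -/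
set_option synthInstance.maxHeartbeats 1000000
set_option maxHeartbeats 1000000

/-!
For `m ≠ 0`, every orbit of `SL(2, ℤ)` on the integer matrices of determinant `m` contains exactly
one Hermite normal form `!![a, b; 0, d]` with `0 < a` and `0 ≤ b < |d|`: the Euclidean algorithm on
the first column reaches one, and a unimodular matrix carrying one such form to another is upper
unitriangular, hence shifts `b` by a multiple of `d` and must be the identity. Since `a * d = m`,
the sign of `d` is that of `m`, so the forms are counted by the factorizations `|m| = a * |d|`, each
of them contributing the `|d|` possible values of `b`.
-/

open FixedDetMatrices
open scoped MatrixGroups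

section OrbitQuotient

variable (G α : Type*) [Group G] [MulAction G α]

/-- The orbit space of a group action, presented as the quotient by the unbundled relation
`∃ g, g • a = b` instead of by the setoid `MulAction.orbitRel`. -/
def quotExistsSMulEquivOrbits :
    (Quot fun a b : α => ∃ g : G, g • a = b) ≃ MulAction.orbitRel.Quotient G α :=
  Quot.congrRight fun _ _ => MulAction.mem_orbit_symm

end OrbitQuotient

section Uniqueness

variable {m : ℤ}

theorem apply_zero_zero_mul_apply_one_one {A : FixedDetMatrix (Fin 2) ℤ m}
    (hA : A.1 1 0 = 0) : A.1 0 0 * A.1 1 1 = m := by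
  have hdet := A.2
  rwa [Matrix.det_fin_two, hA, mul_zero, sub_zero] at hdet

theorem smul_apply_zero {A : FixedDetMatrix (Fin 2) ℤ m} (hA : A.1 1 0 = 0)
    (g : SL(2, ℤ)) (i : Fin 2) : (g • A).1 i 0 = g i 0 * A.1 0 0 := by
  rw [smul_coe, Matrix.mul_apply, Fin.sum_univ_two, hA, mul_zero, add_zero]

theorem exists_eq_T_zpow_of_smul_apply_one_zero {A : FixedDetMatrix (Fin 2) ℤ m} {g : SL(2, ℤ)}
    (hc : A.1 1 0 = 0) (ha : 0 < A.1 0 0) (hc' : (g • A).1 1 0 = 0) (ha' : 0 < (g • A).1 0 0) :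
    ∃ q : ℤ, g = ModularGroup.T ^ q := by
  rw [smul_apply_zero hc] at hc' ha'
  have h10 : g 1 0 = 0 := (mul_eq_zero.mp hc').resolve_right ha.ne'
  have hpos : 0 < g 0 0 := pos_of_mul_pos_left ha' ha.le
  have hdiag : g 0 0 * g 1 1 = 1 := by
    have hdet := g.det_coe
    rwa [Matrix.det_fin_two, h10, mul_zero, sub_zero] at hdet
  have h00 : g 0 0 = 1 := Int.eq_one_of_mul_eq_one_right hpos.le hdiag
  have h11 : g 1 1 = 1 := by rwa [h00, one_mul] at hdiag
  refine ⟨g 0 1, Subtype.ext <| (Matrix.eta_fin_two g.1).trans ?_⟩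
  rw [ModularGroup.coe_T_zpow, h00, h10, h11]

theorem T_zpow_smul_apply_zero_one (A : FixedDetMatrix (Fin 2) ℤ m) (q : ℤ) :
    (ModularGroup.T ^ q • A).1 0 1 = A.1 0 1 + q * A.1 1 1 := by
  simp [smul_coe, ModularGroup.coe_T_zpow, Matrix.mul_apply]

theorem T_zpow_smul_apply_one (A : FixedDetMatrix (Fin 2) ℤ m) (q : ℤ) (j : Fin 2) :
    (ModularGroup.T ^ q • A).1 1 j = A.1 1 j := by
  simp [smul_coe, ModularGroup.coe_T_zpow, Matrix.mul_apply]

theorem eq_one_of_smul_mem_reps {A : FixedDetMatrix (Fin 2) ℤ m} {g : SL(2, ℤ)}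
    (hA : A ∈ reps m) (hgA : g • A ∈ reps m) : g = 1 := by
  obtain ⟨q, rfl⟩ := exists_eq_T_zpow_of_smul_apply_one_zero hA.1 hA.2.1 hgA.1 hgA.2.1
  obtain ⟨-, -, hb, hbd⟩ := hA
  obtain ⟨-, -, hb', hbd'⟩ := hgA
  rw [T_zpow_smul_apply_zero_one] at hb' hbd'
  rw [T_zpow_smul_apply_one, abs_of_nonneg hb'] at hbd'
  rw [abs_of_nonneg hb] at hbd
  have hlt : |q * A.1 1 1| < |A.1 1 1| := by
    simpa only [add_sub_cancel_left] using abs_sub_lt_of_nonneg_of_lt hb' hbd' hb hbd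
  have hd : A.1 1 1 ≠ 0 := abs_pos.mp (hb.trans_lt hbd)
  have hq : q * A.1 1 1 = 0 :=
    Int.eq_zero_of_abs_lt_dvd ((abs_dvd _ _).mpr (dvd_mul_left _ _)) hlt
  rw [(mul_eq_zero.mp hq).resolve_right hd, zpow_zero]

end Uniqueness

section Reduction

variable {m : ℤ}

theorem reduce_mem_orbit (A : FixedDetMatrix (Fin 2) ℤ m) :
    reduce A ∈ MulAction.orbit SL(2, ℤ) A := by
  induction A using reduce_rec with
  | base A hc =>
    by_cases ha : 0 < A.1 0 0
    · exact reduce_of_pos hc ha ▸ MulAction.mem_orbit A _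
    · simp only [reduce_of_not_pos hc ha, ← mul_smul]
      exact MulAction.mem_orbit A _
  | step A hc ih =>
    rw [reduce_reduceStep hc, reduceStep, ← mul_smul] at ih
    exact MulAction.orbit_smul (_ : SL(2, ℤ)) A ▸ ih

/-- The bijection sending a Hermite normal form of determinant `m` to its `SL(2, ℤ)`-orbit. -/
noncomputable def repsEquivOrbits (hm : m ≠ 0) :
    reps m ≃ MulAction.orbitRel.Quotient SL(2, ℤ) (FixedDetMatrix (Fin 2) ℤ m) :=
  Equiv.ofBijective (fun A => Quotient.mk _ A.1) <| by
    constructor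
    · rintro ⟨A, hA⟩ ⟨B, hB⟩ hAB
      obtain ⟨g, rfl : g • B = A⟩ := Quotient.exact hAB
      simp only [eq_one_of_smul_mem_reps hB hA, one_smul]
    · rintro ⟨A⟩
      exact ⟨⟨reduce A, reduce_mem_reps hm A⟩, Quotient.sound (reduce_mem_orbit A)⟩

end Reduction

section Counting

/-- The absolute values `((a, d), b)` of the entries of the Hermite normal forms
`!![a, b; 0, ± d]` of determinant `m`. For `m = 0` there are none, since
`Nat.divisorsAntidiagonal 0 = ∅`. -/
def hermiteEntries (m : ℤ) : Finset (Σ _ : ℕ × ℕ, ℕ) :=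
  m.natAbs.divisorsAntidiagonal.sigma fun p => Finset.range p.2

variable {m : ℤ}

theorem mem_hermiteEntries {a d b : ℕ} :
    ⟨(a, d), b⟩ ∈ hermiteEntries m ↔ (a * d = m.natAbs ∧ m ≠ 0) ∧ b < d := by
  simp [hermiteEntries]

theorem card_hermiteEntries (m : ℤ) :
    (hermiteEntries m).card = ∑ d ∈ m.natAbs.divisors, d := by
  simp only [hermiteEntries, Finset.card_sigma, Finset.card_range]
  exact Nat.sum_divisorsAntidiagonal' fun _ d => d

theorem natAbs_entries_mem_hermiteEntries {A : FixedDetMatrix (Fin 2) ℤ m} (hA : A ∈ reps m) :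
    ⟨((A.1 0 0).natAbs, (A.1 1 1).natAbs), (A.1 0 1).natAbs⟩ ∈ hermiteEntries m := by
  have hmul := apply_zero_zero_mul_apply_one_one hA.1
  obtain ⟨-, ha, -, hbd⟩ := hA
  have hd : A.1 1 1 ≠ 0 := abs_pos.mp ((abs_nonneg _).trans_lt hbd)
  refine mem_hermiteEntries.mpr ⟨⟨?_, hmul ▸ mul_ne_zero ha.ne' hd⟩, ?_⟩
  · rw [← Int.natAbs_mul, hmul]
  · zify
    exact hbd

theorem sign_mul_natAbs_apply_one_one {A : FixedDetMatrix (Fin 2) ℤ m} (hc : A.1 1 0 = 0)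
    (ha : 0 < A.1 0 0) : m.sign * (A.1 1 1).natAbs = A.1 1 1 := by
  have hsign : m.sign = (A.1 1 1).sign := by
    have h := congrArg Int.sign (apply_zero_zero_mul_apply_one_one hc)
    rwa [Int.sign_mul, Int.sign_eq_one_of_pos ha, one_mul, eq_comm] at h
  rw [hsign, Int.sign_mul_natAbs]

/-- The upper triangular matrix `!![a, b; 0, ± d]` of determinant `m`, the sign being that of
`m`. -/
def hermiteMatrix {a d : ℕ} (b : ℕ) (had : a * d = m.natAbs) : FixedDetMatrix (Fin 2) ℤ m :=
  ⟨!![(a : ℤ), b; 0, m.sign * d], by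
    rw [Matrix.det_fin_two_of, mul_zero, sub_zero, mul_left_comm, ← Nat.cast_mul, had,
      Int.sign_mul_natAbs]⟩

theorem hermiteMatrix_mem_reps {a d b : ℕ} (had : a * d = m.natAbs) (hm : m ≠ 0) (hbd : b < d) :
    hermiteMatrix b had ∈ reps m := by
  have ha : a ≠ 0 := left_ne_zero_of_mul (had ▸ Int.natAbs_ne_zero.mpr hm)
  refine ⟨rfl, ?_, ?_, ?_⟩
  · simpa [hermiteMatrix] using Nat.pos_of_ne_zero ha
  · simp [hermiteMatrix]
  · simpa [hermiteMatrix, abs_mul, Int.abs_sign_of_ne_zero hm] using hbd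

/-- The bijection sending a Hermite normal form of determinant `m` to the absolute values of its
entries; no sign is lost, since the last entry has the sign of `m`. -/
def repsEquivHermiteEntries (m : ℤ) : reps m ≃ hermiteEntries m where
  toFun A := ⟨_, natAbs_entries_mem_hermiteEntries A.2⟩
  invFun := fun ⟨⟨(_, _), b⟩, hx⟩ =>
    have h := mem_hermiteEntries.mp hx
    ⟨hermiteMatrix b h.1.1, hermiteMatrix_mem_reps h.1.1 h.1.2 h.2⟩
  left_inv := by
    rintro ⟨A, hA⟩
    refine Subtype.ext (ext' _ _ ?_)
    rw [Matrix.eta_fin_two A.1, hA.1]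
    simp only [hermiteMatrix, sign_mul_natAbs_apply_one_one hA.1 hA.2.1,
      Int.natAbs_of_nonneg hA.2.1.le, Int.natAbs_of_nonneg hA.2.2.1]
  right_inv := by
    rintro ⟨⟨⟨a, d⟩, b⟩, hx⟩
    have hm : m ≠ 0 := (mem_hermiteEntries.mp hx).1.2
    simp [hermiteMatrix, Int.natAbs_mul, Int.natAbs_sign_of_ne_zero hm]

theorem card_orbits_fixedDetMatrix (hm : m ≠ 0) :
    Nat.card (MulAction.orbitRel.Quotient SL(2, ℤ) (FixedDetMatrix (Fin 2) ℤ m)) =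
      ∑ d ∈ m.natAbs.divisors, d := by
  rw [← Nat.card_congr (repsEquivOrbits hm), Nat.card_congr (repsEquivHermiteEntries m),
    Nat.card_eq_finsetCard, card_hermiteEntries]

end Counting

theorem stmt13_general (m : ℤ) (hm : m ≠ 0) :
    Nat.card (Quot fun a b : {A : Matrix (Fin 2) (Fin 2) ℤ // A.det = m} =>
      ∃ g : SL(2, ℤ), (g : Matrix (Fin 2) (Fin 2) ℤ) * a.1 = b.1) =
      ∑ d ∈ m.natAbs.divisors, d := by
  have hrel (a b : FixedDetMatrix (Fin 2) ℤ m) :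
      (∃ g : SL(2, ℤ), (g : Matrix (Fin 2) (Fin 2) ℤ) * a.1 = b.1) ↔
        ∃ g : SL(2, ℤ), g • a = b :=
    exists_congr fun g => (Subtype.ext_iff (a1 := g • a)).symm
  rw [← card_orbits_fixedDetMatrix hm]
  exact Nat.card_congr ((Quot.congrRight hrel).trans (quotExistsSMulEquivOrbits _ _))

/-- for `n ≥ 1`, the set of `2×2` integer matrices of determinant `n` has
exactly `σ(n) = Σ_{d ∣ n} d` orbits under left multiplication by `SL(2,ℤ)`. -/
theorem stmt13 (n : ℕ) (hn : 1 ≤ n) :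
    Nat.card (Quot fun a b : {m : Matrix (Fin 2) (Fin 2) ℤ // m.det = (n : ℤ)} =>
      ∃ g : Matrix.SpecialLinearGroup (Fin 2) ℤ,
        (g : Matrix (Fin 2) (Fin 2) ℤ) * a.1 = b.1) =
      ∑ d ∈ n.divisors, d :=
  stmt13_general n (by omega)
end

section
/- On the Hilbert space ℓ² of square-summable complex sequences indexed by the positive integers, with orthonormal basis (ε_k)_{k≥1}, define for each integer n ≥ 1 the bounded operator μₙ by μₙ ε_k = ε_{nk}, and for each rational r the operator e(r) by e(r) ε_k = exp(2πi k r) ε_k. Then these operators satisfy the defining relations of the Bost–Connes algebra: μₙ* μₙ = 1 for all n ≥ 1; μ_k μ_n = μ_{kn} for all k, n ≥ 1; e(0) = 1, e(r)* = e(−r), e(r)e(s) = e(r+s), and e(r) depends only on r mod ℤ; and for all n ≥ 1 and all r ∈ ℚ, μₙ e(r) μₙ* = (1/n) Σ_{j=0}^{n−1} e((r+j)/n). -/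
/-!
An operator is determined by its values on a Hilbert basis, so each relation can be read off from
the action on basis vectors: `e(r)` is diagonal, and `μₙ` is the isometry induced by the injection
`k ↦ nk`. Conjugating a diagonal operator by such an isometry transports its eigenvalues along the
injection and puts `0` off the image. Hence the last relation says that the mean over `j` of
`exp(2πim(r + j)/n)` is `exp(2πikr)` if `m = nk` and vanishes if `n ∤ m`, which is the
orthogonality relation for the `n`-th roots of unity.
-/

set_option synthInstance.maxHeartbeats 1000000
set_option maxHeartbeats 1000000

open scoped ENNReal

/-- The Hilbert space `ℓ²` of square-summable complex sequences indexed by the positive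
integers. -/
noncomputable abbrev BCHilbert := lp (fun _ : ℕ+ => ℂ) 2

open ContinuousLinearMap (adjoint)
open scoped InnerProductSpace

section HilbertBasis

variable {ι 𝕜 E : Type*} [RCLike 𝕜] [NormedAddCommGroup E] [InnerProductSpace 𝕜 E]

theorem eq_of_inner_hilbertBasis_eq (b : HilbertBasis ι 𝕜 E) {x y : E}
    (h : ∀ i, ⟪b i, x⟫_𝕜 = ⟪b i, y⟫_𝕜) : x = y :=
  b.repr.injective <| lp.ext <| funext fun i => by simpa only [b.repr_apply_apply] using h i

theorem clm_eq_of_eq_on_hilbertBasis {F : Type*} [AddCommMonoid F] [Module 𝕜 F]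
    [TopologicalSpace F] [T2Space F] (b : HilbertBasis ι 𝕜 E) {S T : E →L[𝕜] F}
    (h : ∀ i, S (b i) = T (b i)) : S = T :=
  ContinuousLinearMap.ext_on
    (Submodule.dense_iff_topologicalClosure_eq_top.mpr b.dense_span) (Set.forall_mem_range.mpr h)

/-- The operator `T` is diagonal in the Hilbert basis `b`, with eigenvalue `d i` at `b i`. -/
def IsDiagonalIn (b : HilbertBasis ι 𝕜 E) (d : ι → 𝕜) (T : E →L[𝕜] E) : Prop :=
  ∀ i, T (b i) = d i • b i

/-- The operator `T` maps the Hilbert basis `b` to itself along the map `f` of indices; for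
injective `f` it is an isometry onto the closed span of the vectors `b (f i)`. -/
def MapsBasisAlong (b : HilbertBasis ι 𝕜 E) (f : ι → ι) (T : E →L[𝕜] E) : Prop :=
  ∀ i, T (b i) = b (f i)

variable {b : HilbertBasis ι 𝕜 E} {c d : ι → 𝕜} {f g : ι → ι} {S T : E →L[𝕜] E}

namespace IsDiagonalIn

theorem eq_of_eigenvalues_eq (hS : IsDiagonalIn b c S) (hT : IsDiagonalIn b d T) (h : c = d) :
    S = T :=
  clm_eq_of_eq_on_hilbertBasis b fun i => by rw [hS i, hT i, h]

protected theorem one : IsDiagonalIn b 1 (1 : E →L[𝕜] E) := fun i => (one_smul 𝕜 (b i)).symm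

protected theorem mul (hS : IsDiagonalIn b c S) (hT : IsDiagonalIn b d T) :
    IsDiagonalIn b (c * d) (S * T) := fun i => by
  rw [mul_apply_eq_comp, hT i, map_smul, hS i, smul_smul, Pi.mul_apply, mul_comm]

protected theorem smul (hT : IsDiagonalIn b d T) (a : 𝕜) : IsDiagonalIn b (a • d) (a • T) :=
  fun i => by
    rw [smul_apply, hT i, Pi.smul_apply, smul_assoc]

protected theorem sum {α : Type*} {s : Finset α} {d : α → ι → 𝕜} {T : α → E →L[𝕜] E}
    (hT : ∀ a ∈ s, IsDiagonalIn b (d a) (T a)) :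
    IsDiagonalIn b (∑ a ∈ s, d a) (∑ a ∈ s, T a) := fun i => by
  rw [sum_apply, Finset.sum_apply, Finset.sum_smul]
  exact Finset.sum_congr rfl fun a ha => hT a ha i

protected theorem adjoint [CompleteSpace E] (hT : IsDiagonalIn b d T) :
    IsDiagonalIn b (star d) (adjoint T) := fun i => by
  classical
  refine eq_of_inner_hilbertBasis_eq b fun j => ?_
  rw [ContinuousLinearMap.adjoint_inner_right, hT j, inner_smul_left, inner_smul_right,
    orthonormal_iff_ite.mp b.orthonormal]
  rcases eq_or_ne j i with rfl | hji
  · rfl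
  · simp only [if_neg hji, mul_zero]

end IsDiagonalIn

namespace MapsBasisAlong

theorem eq_of_eq (hS : MapsBasisAlong b f S) (hT : MapsBasisAlong b g T) (h : f = g) : S = T :=
  clm_eq_of_eq_on_hilbertBasis b fun i => by rw [hS i, hT i, h]

protected theorem mul (hS : MapsBasisAlong b f S) (hT : MapsBasisAlong b g T) :
    MapsBasisAlong b (f ∘ g) (S * T) := fun i => by
  rw [mul_apply_eq_comp, hT i, hS (g i), Function.comp_apply]

variable [CompleteSpace E]

theorem adjoint_apply (hT : MapsBasisAlong b f T) (hf : f.Injective) (i : ι) :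
    adjoint T (b (f i)) = b i := by
  classical
  refine eq_of_inner_hilbertBasis_eq b fun j => ?_
  rw [ContinuousLinearMap.adjoint_inner_right, hT j]
  simp only [orthonormal_iff_ite.mp b.orthonormal, hf.eq_iff]

theorem adjoint_apply_eq_zero (hT : MapsBasisAlong b f T) {i : ι} (hi : i ∉ Set.range f) :
    adjoint T (b i) = 0 :=
  eq_of_inner_hilbertBasis_eq b fun j => by
    rw [ContinuousLinearMap.adjoint_inner_right, hT j, inner_zero_right]
    exact b.orthonormal.inner_eq_zero fun h => hi ⟨j, h⟩

theorem adjoint_mul_self (hT : MapsBasisAlong b f T) (hf : f.Injective) : adjoint T * T = 1 :=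
  clm_eq_of_eq_on_hilbertBasis b fun i => by
    rw [mul_apply_eq_comp, hT i, hT.adjoint_apply hf i, one_apply_eq_self]

theorem isDiagonalIn_conj (hT : MapsBasisAlong b f T) (hf : f.Injective)
    (hS : IsDiagonalIn b d S) :
    IsDiagonalIn b (Function.extend f d 0) (T * S * adjoint T) := fun i => by
  rw [mul_apply_eq_comp, mul_apply_eq_comp]
  by_cases hi : i ∈ Set.range f
  · obtain ⟨k, rfl⟩ := hi
    rw [hT.adjoint_apply hf, hS k, map_smul, hT k, hf.extend_apply]
  · rw [hT.adjoint_apply_eq_zero hi, map_zero, map_zero, Function.extend_apply' _ _ _ hi,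
      Pi.zero_apply, zero_smul]

end MapsBasisAlong

end HilbertBasis

theorem sum_pow_pow_of_isPrimitiveRoot {R : Type*} [CommRing R] [NoZeroDivisors R] {ζ : R}
    {n : ℕ} (hζ : IsPrimitiveRoot ζ n) (m : ℕ) :
    ∑ j ∈ Finset.range n, (ζ ^ m) ^ j = if n ∣ m then (n : R) else 0 := by
  split_ifs with h
  · simp only [(hζ.pow_eq_one_iff_dvd m).mpr h, one_pow, Finset.sum_const, Finset.card_range,
      nsmul_one]
  · have hne : ζ ^ m - 1 ≠ 0 := sub_ne_zero.mpr fun h1 => h ((hζ.pow_eq_one_iff_dvd m).mp h1)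
    have hpow : (ζ ^ m) ^ n = 1 := by rw [pow_right_comm, hζ.pow_eq_one, one_pow]
    refine (mul_eq_zero.mp ?_).resolve_left hne
    rw [mul_geom_sum, hpow, sub_self]

/-- The eigenvalues `k ↦ exp(2πikx)` of the Bost–Connes operator `e(x)`, which are defined for
every real `x`. -/
noncomputable def phase (x : ℝ) (k : ℕ+) : ℂ :=
  Complex.exp (2 * Real.pi * Complex.I * (k : ℕ) * x)

theorem phase_zero : phase 0 = 1 := funext fun k => by
  rw [phase, Complex.ofReal_zero, mul_zero, Complex.exp_zero, Pi.one_apply]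

theorem phase_add (x y : ℝ) : phase (x + y) = phase x * phase y := funext fun k => by
  rw [phase, Complex.ofReal_add, mul_add, Complex.exp_add, Pi.mul_apply, phase, phase]

theorem phase_intCast (m : ℤ) : phase m = 1 := funext fun k =>
  Complex.exp_eq_one_iff.mpr ⟨k * m, by push_cast; ring⟩

theorem star_phase (x : ℝ) : star (phase x) = phase (-x) := funext fun k => by
  rw [Pi.star_apply, phase, phase, Complex.star_def, ← Complex.exp_conj]
  simp only [map_mul, map_ofNat, Complex.conj_ofReal, Complex.conj_I, map_natCast,
    Complex.ofReal_neg, mul_neg, neg_mul]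

theorem phase_div_mul (x : ℝ) (n k : ℕ+) : phase (x / (n : ℕ)) (n * k) = phase x k := by
  rw [phase, phase, PNat.mul_coe]
  push_cast
  field_simp

theorem phase_natCast_div (n m : ℕ+) (j : ℕ) :
    phase (j / (n : ℕ)) m = (Complex.exp (2 * Real.pi * Complex.I / (n : ℕ)) ^ (m : ℕ)) ^ j := by
  rw [phase, ← Complex.exp_nat_mul, ← Complex.exp_nat_mul]
  push_cast
  ring_nf

theorem sum_phase_natCast_div (n m : ℕ+) :
    ∑ j ∈ Finset.range n, phase (j / (n : ℕ)) m = if (n : ℕ) ∣ m then ((n : ℕ) : ℂ) else 0 := by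
  simp only [phase_natCast_div,
    sum_pow_pow_of_isPrimitiveRoot (Complex.isPrimitiveRoot_exp n n.ne_zero)]

theorem average_phase_add_div (n : ℕ+) (x : ℝ) :
    ((n : ℕ) : ℂ)⁻¹ • ∑ j ∈ Finset.range n, phase ((x + j) / (n : ℕ)) =
      Function.extend (n * ·) (phase x) 0 := by
  funext m
  have hsum : (((n : ℕ) : ℂ)⁻¹ • ∑ j ∈ Finset.range n, phase ((x + j) / (n : ℕ))) m =
      ((n : ℕ) : ℂ)⁻¹ * (phase (x / (n : ℕ)) m * if (n : ℕ) ∣ m then ((n : ℕ) : ℂ) else 0) := by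
    simp only [Pi.smul_apply, Finset.sum_apply, smul_eq_mul, add_div, phase_add, Pi.mul_apply,
      ← Finset.mul_sum, sum_phase_natCast_div]
  rw [hsum]
  by_cases h : (n : ℕ) ∣ m
  · obtain ⟨k, rfl⟩ := PNat.dvd_iff.mpr h
    rw [(mul_right_injective n).extend_apply, if_pos h, phase_div_mul,
      mul_comm (phase x k), inv_mul_cancel_left₀ (Nat.cast_ne_zero.mpr n.ne_zero)]
  · have hm : ¬∃ k, n * k = m := fun ⟨k, hk⟩ => h (PNat.dvd_iff.mp ⟨k, hk.symm⟩)
    rw [if_neg h, mul_zero, mul_zero, Function.extend_apply' _ _ _ hm, Pi.zero_apply]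

theorem stmt14_general {E K : Type*} [NormedAddCommGroup E] [InnerProductSpace ℂ E]
    [CompleteSpace E] [Field K] [Algebra K ℝ] (b : HilbertBasis ℕ+ ℂ E)
    (μ : ℕ+ → E →L[ℂ] E) (e : K → E →L[ℂ] E)
    (hμ : ∀ n : ℕ+, MapsBasisAlong b (n * ·) (μ n))
    (he : ∀ r : K, IsDiagonalIn b (phase (algebraMap K ℝ r)) (e r)) :
    (∀ n : ℕ+, adjoint (μ n) * μ n = 1) ∧
    (∀ k n : ℕ+, μ k * μ n = μ (k * n)) ∧
    e 0 = 1 ∧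
    (∀ r : K, adjoint (e r) = e (-r)) ∧
    (∀ r s : K, e r * e s = e (r + s)) ∧
    (∀ (r : K) (m : ℤ), e (r + m) = e r) ∧
    (∀ (n : ℕ+) (r : K),
      μ n * e r * adjoint (μ n) =
        (((n : ℕ) : ℂ))⁻¹ • ∑ j ∈ Finset.range (n : ℕ), e ((r + j) / (n : ℕ))) := by
  refine ⟨fun n => (hμ n).adjoint_mul_self (mul_right_injective n),
    fun k n => ((hμ k).mul (hμ n)).eq_of_eq (hμ (k * n)) (comp_mul_left k n),
    (he 0).eq_of_eigenvalues_eq .one ?_,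
    fun r => (he r).adjoint.eq_of_eigenvalues_eq (he (-r)) ?_,
    fun r s => ((he r).mul (he s)).eq_of_eigenvalues_eq (he (r + s)) ?_,
    fun r m => (he (r + m)).eq_of_eigenvalues_eq (he r) ?_,
    fun n r => ((hμ n).isDiagonalIn_conj (mul_right_injective n) (he r)).eq_of_eigenvalues_eq
      ((IsDiagonalIn.sum fun (j : ℕ) _ => he ((r + j) / (n : ℕ))).smul _) ?_⟩
  · rw [map_zero, phase_zero]
  · rw [star_phase, map_neg]
  · rw [map_add, phase_add]
  · rw [map_add, map_intCast, phase_add, phase_intCast, mul_one]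
  · simp only [map_div₀, map_add, map_natCast, average_phase_add_div]

/-- The standard Hilbert basis `(ε_k)` of `ℓ²`. -/
noncomputable def stdHilbertBasis : HilbertBasis ℕ+ ℂ BCHilbert :=
  HilbertBasis.ofRepr (LinearIsometryEquiv.refl ℂ BCHilbert)

theorem stdHilbertBasis_apply (k : ℕ+) : stdHilbertBasis k = lp.single 2 k (1 : ℂ) :=
  (stdHilbertBasis.repr_symm_single k).symm

/-- the operators `μₙ ε_k = ε_{nk}` and `e(r) ε_k = exp(2πikr) ε_k` on `ℓ²`
satisfy the defining relations of the Bost–Connes algebra. -/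
theorem stmt14 (μ : ℕ+ → BCHilbert →L[ℂ] BCHilbert) (e : ℚ → BCHilbert →L[ℂ] BCHilbert)
    (hμ : ∀ n k : ℕ+, μ n (lp.single 2 k (1 : ℂ)) = lp.single 2 (n * k) (1 : ℂ))
    (he : ∀ (r : ℚ) (k : ℕ+),
      e r (lp.single 2 k (1 : ℂ)) =
        Complex.exp (2 * Real.pi * Complex.I * (k : ℕ) * (r : ℚ)) • lp.single 2 k (1 : ℂ)) :
    (∀ n : ℕ+, ContinuousLinearMap.adjoint (μ n) * μ n = 1) ∧
    (∀ k n : ℕ+, μ k * μ n = μ (k * n)) ∧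
    e 0 = 1 ∧
    (∀ r : ℚ, ContinuousLinearMap.adjoint (e r) = e (-r)) ∧
    (∀ r s : ℚ, e r * e s = e (r + s)) ∧
    (∀ (r : ℚ) (m : ℤ), e (r + m) = e r) ∧
    (∀ (n : ℕ+) (r : ℚ),
      μ n * e r * ContinuousLinearMap.adjoint (μ n) =
        (((n : ℕ) : ℂ))⁻¹ • ∑ j ∈ Finset.range (n : ℕ), e ((r + j) / (n : ℕ))) := by
  exact stmt14_general stdHilbertBasis μ e
    (fun n k => by simpa only [stdHilbertBasis_apply] using hμ n k)
    (fun r k => by simpa [stdHilbertBasis_apply, phase] using he r k)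
end

section
/- Let g ≥ 2 and let S ⊆ F^ℤ be the closed shift-invariant subspace of doubly infinite admissible sequences in the alphabet F of 2g letters (no letter immediately followed by its inverse), with the product topology (F discrete), and let T : S → S be the shift (T a)_i = a_{i+1}. Then every continuous function f : S → ℤ with f ∘ T = f is constant; equivalently, the kernel of the map δ = 1 − T on the group C(S,ℤ) of continuous integer-valued functions is the copy of ℤ consisting of constant functions. (This computes K₁(C(S) ⋊_T ℤ) ≅ ℤ via the Pimsner–Voiculescu exact sequence.) -/
set_option synthInstance.maxHeartbeats 1000000
set_option maxHeartbeats 1000000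

/-- The involution `i ↦ i + g mod 2g` on the alphabet of `2g` letters,
pairing each letter with its inverse. -/
def letterInv (g : ℕ) (x : Fin (2 * g)) : Fin (2 * g) :=
  ⟨((x : ℕ) + g) % (2 * g), Nat.mod_lt _ (Nat.lt_of_le_of_lt (Nat.zero_le _) x.isLt)⟩

/-- The space of doubly infinite admissible sequences (no letter immediately followed by its
inverse), a closed subspace of the product space. -/
def AdmSeq (g : ℕ) : Type :=
  {a : ℤ → Fin (2 * g) // ∀ i : ℤ, a (i + 1) ≠ letterInv g (a i)}

instance (g : ℕ) : TopologicalSpace (AdmSeq g) :=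
  inferInstanceAs (TopologicalSpace {a : ℤ → Fin (2 * g) // ∀ i : ℤ, a (i + 1) ≠ letterInv g (a i)})

/-- The two-sided shift on admissible sequences. -/
def admShift (g : ℕ) : AdmSeq g → AdmSeq g :=
  fun a => ⟨fun i => a.1 (i + 1), fun i => a.2 (i + 1)⟩

/-!
Two admissible sequences can be joined: since `2g > 2`, some letter can be inserted between any left
half of the first and any right half of the second. A basic open set constrains only finitely many
coordinates, so it contains every sequence that agrees with a given member of it far enough to the
left, or far enough to the right. Joining therefore shows that the shift is topologically
transitive, and a continuous invariant function on a topologically transitive system cannot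
take two values with disjoint neighbourhoods. For the joining it is enough that any two letters are
connected by a finite admissible word.
-/

open Filter Relation Topology

theorem exists_finset_forall_mem_of_mem_nhds {ι : Type*} {X : ι → Type*}
    [∀ i, TopologicalSpace (X i)] {a : ∀ i, X i} {U : Set (∀ i, X i)} (hU : U ∈ 𝓝 a) :
    ∃ I : Finset ι, ∀ c : ∀ i, X i, (∀ i ∈ I, c i = a i) → c ∈ U := by
  rw [nhds_pi, mem_pi'] at hU
  obtain ⟨I, t, ht, htU⟩ := hU
  refine ⟨I, fun c hc => htU fun i hi => ?_⟩
  rw [hc i hi]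
  exact mem_of_mem_nhds (ht i)

theorem eq_of_continuous_of_forall_vadd_eq {M X Y : Type*} [AddMonoid M] [TopologicalSpace X]
    [AddAction M X] [AddAction.IsTopologicallyTransitive M X] [TopologicalSpace Y] [T2Space Y]
    {f : X → Y} (hf : Continuous f) (hinv : ∀ (m : M) (x : X), f (m +ᵥ x) = f x) (x y : X) :
    f x = f y := by
  by_contra hxy
  obtain ⟨U, V, hU, hV, hxU, hyV, hUV⟩ := t2_separation hxy
  obtain ⟨m, _, ⟨z, hzU, rfl⟩, hzV⟩ :=
    AddAction.IsTopologicallyTransitive.exists_vadd_inter (M := M)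
      (hU.preimage hf) ⟨x, hxU⟩ (hV.preimage hf) ⟨y, hyV⟩
  have hzV' : f z ∈ V := hinv m z ▸ hzV
  exact Set.disjoint_left.mp hUV hzU hzV'

theorem forall_int_vadd_eq_of_one_vadd_eq {X Y : Type*} [AddAction ℤ X] {f : X → Y}
    (hinv : ∀ x, f ((1 : ℤ) +ᵥ x) = f x) (k : ℤ) (x : X) : f (k +ᵥ x) = f x := by
  induction k with
  | zero => rw [zero_vadd]
  | succ k ih => rw [add_comm, add_vadd, hinv, ih]
  | pred k ih => rw [← hinv, ← add_vadd, add_sub_cancel, ih]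

/-- The two-sided topological Markov shift of a relation `R`: the bi-infinite sequences whose
consecutive entries are related by `R`. The space `AdmSeq g` is, definitionally, the case
`R p q := q ≠ letterInv g p`. -/
def markovShift {α : Type*} (R : α → α → Prop) : Set (ℤ → α) :=
  {a | ∀ i : ℤ, R (a i) (a (i + 1))}

namespace markovShift

variable {α : Type*} {R : α → α → Prop}

/-- The action of `ℤ` by powers of the shift; `1` acts by `(1 +ᵥ a) i = a (i + 1)`. -/
instance : AddAction ℤ (markovShift R) where
  vadd k a := ⟨fun i => a.1 (i + k), fun i => by
    simpa only [add_right_comm i 1 k] using a.2 (i + k)⟩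
  zero_vadd a := Subtype.ext <| funext fun i => congrArg a.1 (add_zero i)
  add_vadd k l a := Subtype.ext <| funext fun i => congrArg a.1 (add_assoc i k l).symm

theorem exists_glue_of_eq {a : ℤ → α} {m : ℤ} (ha : ∀ i < m, R (a i) (a (i + 1)))
    (b : markovShift R) {n : ℤ} (hab : a m = b.1 n) :
    ∃ (c : markovShift R) (k : ℤ), (∀ i ≤ m, c.1 i = a i) ∧ ∀ i ≥ n, c.1 (i + k) = b.1 i := by
  let s : ℤ → α := fun i => if i ≤ m then a i else b.1 (i + (n - m))
  have s_left : ∀ i ≤ m, s i = a i := fun i hi => if_pos hi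
  have s_right : ∀ i ≥ m, s i = b.1 (i + (n - m)) := by
    intro i hi
    rcases hi.eq_or_lt with rfl | hi
    · rw [s_left m le_rfl, hab, add_sub_cancel]
    · exact if_neg hi.not_ge
  have hs : ∀ i, R (s i) (s (i + 1)) := by
    intro i
    rcases lt_or_ge i m with hi | hi
    · rw [s_left i hi.le, s_left (i + 1) hi]
      exact ha i hi
    · rw [s_right i hi, s_right (i + 1) (by lia), add_right_comm]
      exact b.2 _
  refine ⟨⟨s, hs⟩, m - n, s_left, fun i hi => ?_⟩
  calc s (i + (m - n)) = b.1 (i + (m - n) + (n - m)) := s_right _ (by lia)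
    _ = b.1 i := congrArg b.1 (by lia)

theorem exists_glue_of_reflTransGen {a : ℤ → α} {m : ℤ} (ha : ∀ i < m, R (a i) (a (i + 1)))
    (b : markovShift R) {n : ℤ} (hab : ReflTransGen R (a m) (b.1 n)) :
    ∃ (c : markovShift R) (k : ℤ), (∀ i ≤ m, c.1 i = a i) ∧ ∀ i ≥ n, c.1 (i + k) = b.1 i := by
  generalize hp : a m = p at hab
  induction hab using ReflTransGen.head_induction_on generalizing a m with
  | refl => exact exists_glue_of_eq ha b hp
  | @head p q hpq _ ih =>
    let a' := Function.update a (m + 1) q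
    have a'_left : ∀ i ≤ m, a' i = a i := fun i hi => Function.update_of_ne (by lia) _ _
    have a'_last : a' (m + 1) = q := Function.update_self ..
    have ha' : ∀ i < m + 1, R (a' i) (a' (i + 1)) := by
      intro i hi
      rcases (Int.lt_add_one_iff.mp hi).eq_or_lt with rfl | hi
      · rw [a'_left i le_rfl, a'_last, hp]
        exact hpq
      · rw [a'_left i hi.le, a'_left (i + 1) hi]
        exact ha i hi
    obtain ⟨c, k, hca, hcb⟩ := ih ha' a'_last
    exact ⟨c, k, fun i hi => (hca i (by lia)).trans (a'_left i hi), hcb⟩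

theorem isTopologicallyTransitive [TopologicalSpace α] (hR : ∀ p q, ReflTransGen R p q) :
    AddAction.IsTopologicallyTransitive ℤ (markovShift R) := by
  refine ⟨fun {U V} hU ⟨a, haU⟩ hV ⟨b, hbV⟩ => ?_⟩
  obtain ⟨U', hU', rfl⟩ := isOpen_induced_iff.mp hU
  obtain ⟨V', hV', rfl⟩ := isOpen_induced_iff.mp hV
  obtain ⟨I, hI⟩ := exists_finset_forall_mem_of_mem_nhds (hU'.mem_nhds haU)
  obtain ⟨J, hJ⟩ := exists_finset_forall_mem_of_mem_nhds (hV'.mem_nhds hbV)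
  obtain ⟨m, hIm⟩ := I.bddAbove
  obtain ⟨n, hJn⟩ := J.bddBelow
  obtain ⟨c, k, hca, hcb⟩ := exists_glue_of_reflTransGen (fun i _ => a.2 i) b (hR (a.1 m) (b.1 n))
  have hcU : c.1 ∈ U' := hI c.1 fun i hi => hca i (hIm hi)
  have hcV : (k +ᵥ c).1 ∈ V' := hJ (k +ᵥ c).1 fun i hi => hcb i (hJn hi)
  exact ⟨k, k +ᵥ c, Set.vadd_mem_vadd_set hcU, hcV⟩

end markovShift

theorem letterInv_involutive (g : ℕ) : Function.Involutive (letterInv g) := by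
  intro x
  apply Fin.ext
  calc ((x + g) % (2 * g) + g) % (2 * g) = (x + 2 * g) % (2 * g) := by
        rw [Nat.mod_add_mod, add_assoc, ← two_mul]
    _ = x := by rw [Nat.add_mod_right, Nat.mod_eq_of_lt x.isLt]

theorem reflTransGen_ne_letterInv {g : ℕ} (hg : 2 ≤ g) (p q : Fin (2 * g)) :
    ReflTransGen (fun x y => y ≠ letterInv g x) p q := by
  have hcard : 3 ≤ ENat.card (Fin (2 * g)) := by
    rw [ENat.card_eq_coe_fintype_card, Fintype.card_fin]
    exact_mod_cast (by lia : 3 ≤ 2 * g)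
  obtain ⟨x, hxp, hxq⟩ :=
    ENat.exists_ne_ne_of_three_le hcard (letterInv g p) (letterInv g q)
  have hqx : q ≠ letterInv g x := fun h => hxq ((letterInv_involutive g).eq_iff.mp h.symm)
  exact .head hxp (.single hqx)

theorem stmt15_general {α Y : Type*} [TopologicalSpace α] [TopologicalSpace Y] [T2Space Y]
    {R : α → α → Prop} (hR : ∀ p q, ReflTransGen R p q) {f : markovShift R → Y}
    (hf : Continuous f) (hinv : ∀ a, f ((1 : ℤ) +ᵥ a) = f a) (a b : markovShift R) :
    f a = f b :=
  have := markovShift.isTopologicallyTransitive hR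
  eq_of_continuous_of_forall_vadd_eq hf (forall_int_vadd_eq_of_one_vadd_eq hinv) a b

/-- every continuous shift-invariant integer-valued function on the subshift of
admissible doubly infinite sequences is constant (the invariants of the shift are `ℤ`, i.e.
`K₁(C(S) ⋊_T ℤ) ≅ ℤ`). -/
theorem stmt15 (g : ℕ) (hg : 2 ≤ g) (f : AdmSeq g → ℤ)
    (hf : Continuous f) (hinv : ∀ a : AdmSeq g, f (admShift g a) = f a) :
    ∀ a b : AdmSeq g, f a = f b :=
  stmt15_general (reflTransGen_ne_letterInv hg) hf hinv
end
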